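/- Let f be the complex function f(z) = (1 − z)·exp(−z/(1 − z)), defined for z ≠ 1. Then f is analytic on the open unit disc, and its Taylor coefficients at 0, tₙ = f⁽ⁿ⁾(0)/n!, satisfy Σₙ |tₙ| < ∞; in particular tₙ = O(n^{−5/4}) as n → ∞, and the Taylor series of f at 0 converges absolutely on the closed unit disc |z| ≤ 1. -/

import Mathlib

open scoped Nat

/-- The function `f(z) = (1 - z)·exp(-z/(1 - z))`. -/
noncomputable def f : ℂ → ℂ := fun z => (1 - z) * Complex.exp (-z / (1 - z))

/-- The `n`-th Taylor coefficient of `f` at the origin. -/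
noncomputable def t (n : ℕ) : ℂ := iteratedDeriv n f 0 / (n ! : ℂ)

/-- The quadratic energy used to control the three-term recurrence. -/
noncomputable def en (k y g : ℝ) : ℝ := (8 * k + 7) * y ^ 2 + 12 * (y * g) + 8 * g ^ 2

lemma en_lower (k y g : ℝ) : 8 * k * y ^ 2 ≤ en k y g := by
  unfold en
  nlinarith [sq_nonneg (3 * y + 4 * g), sq_nonneg y]

lemma en_step (k y g y' g' : ℝ) (hk : 1 ≤ k) (hy : (k + 1) * y' = (k + 2) * y + g)
    (hg : g' = g - y) :
    2 * k * en (k + 1) y' g' ≤ (2 * k + 5) * en k y g := by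
  obtain ⟨m, rfl⟩ : ∃ m, k = m - 1 := ⟨k + 1, by ring⟩
  have hm : 2 ≤ m := by linarith
  have hy2 : m * y' = (m + 1) * y + g := by
    have h1 : m - 1 + 1 = m := by ring
    have h2 : m - 1 + 2 = m + 1 := by ring
    rwa [h1, h2] at hy
  have key : 0 ≤ (15 * m ^ 2 + 6 * m + 14) * y ^ 2 + (32 * m + 28) * (y * g)
      + (26 * m + 14) * g ^ 2 := by
    have e : (15 * m ^ 2 + 6 * m + 14) * y ^ 2 + (32 * m + 28) * (y * g)
      + (26 * m + 14) * g ^ 2 = (16 * m + 14) * (y + g) ^ 2 + 10 * m * g ^ 2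
        + (15 * m ^ 2 - 10 * m) * y ^ 2 := by ring
    rw [e]
    have : 0 ≤ 15 * m ^ 2 - 10 * m := by nlinarith
    positivity
  have hid : m ^ 2 * ((2 * (m - 1) + 5) * en (m - 1) y g
      - 2 * (m - 1) * en (m - 1 + 1) y' g') =
      (15 * m ^ 2 + 6 * m + 14) * y ^ 2 + (32 * m + 28) * (y * g)
      + (26 * m + 14) * g ^ 2 := by
    subst hg
    unfold en
    linear_combination (-2 * (m - 1) * ((8 * m + 7) * (m * y' + ((m + 1) * y + g))
      + 12 * m * (g - y))) * hy2
  have hpos : 0 < m ^ 2 := by positivity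
  rw [← hid] at key
  have := nonneg_of_mul_nonneg_right key hpos
  linarith

lemma rec_bound (x : ℕ → ℝ)
    (hx : ∀ n : ℕ, ((n : ℝ) + 2) * x (n + 2) = 2 * n * x (n + 1) - ((n : ℝ) - 1) * x n) :
    ∃ K : ℝ, ∀ n : ℕ, 3 ≤ n → |x n| ≤ K * (n : ℝ) ^ (-(5 / 4 : ℝ)) := by
  set y : ℕ → ℝ := fun k => ((k : ℝ) + 2) * (k + 1) * x (k + 2) with hydef
  set g : ℕ → ℝ := fun k => ((k : ℝ) + 2) * (k + 1) * k * (x (k + 2) - x (k + 1)) with hgdef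
  have hg : ∀ k, g (k + 1) = g k - y k := by
    intro k
    have h := hx (k + 1)
    simp only [hgdef, hydef]
    push_cast at h ⊢
    rw [show k + 1 + 2 = k + 3 from rfl, show k + 1 + 1 = k + 2 from rfl] at *
    linear_combination ((k : ℝ) + 2) * (k + 1) * h
  have hy : ∀ k : ℕ, ((k : ℝ) + 1) * y (k + 1) = ((k : ℝ) + 2) * y k + g k := by
    intro k
    have h := hx (k + 1)
    simp only [hgdef, hydef]
    push_cast at h ⊢
    rw [show k + 1 + 2 = k + 3 from rfl, show k + 1 + 1 = k + 2 from rfl] at *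
    linear_combination ((k : ℝ) + 2) * (k + 1) * h
  have hE : ∀ k : ℕ, 0 ≤ en k (y k) (g k) := fun k =>
    le_trans (by positivity) (en_lower k (y k) (g k))
  set K : ℝ := (en (1 : ℕ) (y 1) (g 1)) ^ 2 with hK
  have hK0 : 0 ≤ K := sq_nonneg _
  have hbd : ∀ k : ℕ, 1 ≤ k → (en k (y k) (g k)) ^ 2 ≤ K * (k : ℝ) ^ 5 := by
    intro k hk
    induction k, hk using Nat.le_induction with
    | base => simp [hK]
    | succ k hk ih =>
      have hk1 : (1 : ℝ) ≤ k := by exact_mod_cast hk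
      have hs := en_step k (y k) (g k) (y (k + 1)) (g (k + 1)) hk1 (hy k) (hg k)
      have hE' := hE (k + 1)
      push_cast at hE' ⊢
      have h0 : 0 ≤ 2 * (k : ℝ) * en (k + 1) (y (k + 1)) (g (k + 1)) := by positivity
      have hsq := pow_le_pow_left₀ h0 hs 2
      rw [mul_pow, mul_pow] at hsq
      have h1 : (2 * (k : ℝ) + 5) ^ 2 * (en k (y k) (g k)) ^ 2 ≤
          (2 * (k : ℝ) + 5) ^ 2 * (K * (k : ℝ) ^ 5) := by gcongr
      have h2 : (2 * (k : ℝ) + 5) ^ 2 * (k : ℝ) ^ 5 ≤ (2 * (k : ℝ)) ^ 2 * ((k : ℝ) + 1) ^ 5 := by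
        have : 0 ≤ (k : ℝ) ^ 2 * (15 * k ^ 3 + 40 * k ^ 2 + 20 * k + 4) := by positivity
        nlinarith
      have h3 := mul_le_mul_of_nonneg_left h2 hK0
      have hpos : 0 < (2 * (k : ℝ)) ^ 2 := by positivity
      refine le_of_mul_le_mul_left ?_ hpos
      linarith
  have hx4 : ∀ n : ℕ, 3 ≤ n → x n ^ 4 * (n : ℝ) ^ 5 ≤ K := by
    intro n hn
    obtain ⟨k, rfl⟩ : ∃ k, n = k + 2 := ⟨n - 2, by omega⟩
    have hk1 : (1 : ℝ) ≤ k := by exact_mod_cast (by omega : 1 ≤ k)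
    have h1 := hbd k (by omega)
    have h2 := pow_le_pow_left₀ (by positivity) (en_lower k (y k) (g k)) 2
    have h3 : (8 * (k : ℝ) * y k ^ 2) ^ 2 ≤ K * (k : ℝ) ^ 5 := h2.trans h1
    have h4 : 64 * (y k) ^ 4 ≤ K * (k : ℝ) ^ 3 := by
      have hpos : 0 < (k : ℝ) ^ 2 := by positivity
      refine le_of_mul_le_mul_left ?_ hpos
      linarith
    have h5 : 64 * (y k) ^ 4 ≤ K * ((k : ℝ) + 2) ^ 3 := h4.trans (by gcongr; linarith)
    have h6 : ((k : ℝ) + 2) ^ 4 * (x (k + 2) ^ 4 * ((k : ℝ) + 2) ^ 4)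
        ≤ 16 * y k ^ 4 := by
      have e : 16 * y k ^ 4 = (2 * ((k : ℝ) + 1)) ^ 4 * (x (k + 2) ^ 4 * ((k : ℝ) + 2) ^ 4) := by
        simp only [hydef]; ring
      rw [e]
      have : 0 ≤ x (k + 2) ^ 4 := by positivity
      gcongr
      linarith
    push_cast
    have hpos : 0 < ((k : ℝ) + 2) ^ 3 := by positivity
    refine le_of_mul_le_mul_left ?_ hpos
    have : 0 ≤ y k ^ 4 := by positivity
    linarith
  refine ⟨1 + K, fun n hn => ?_⟩
  have hn0 : (0 : ℝ) < n := by exact_mod_cast (by omega : 0 < n)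
  rw [Real.rpow_neg hn0.le, ← div_eq_mul_inv, le_div_iff₀ (by positivity)]
  refine le_of_pow_le_pow_left₀ (n := 4) (by norm_num) (by positivity) ?_
  have e : (|x n| * (n : ℝ) ^ (5 / 4 : ℝ)) ^ 4 = x n ^ 4 * (n : ℝ) ^ 5 := by
    rw [mul_pow, ← Real.rpow_natCast ((n : ℝ) ^ (5 / 4 : ℝ)), ← Real.rpow_mul hn0.le,
      ← Real.rpow_natCast (n : ℝ) 5, Even.pow_abs (by decide)]
    norm_num
  rw [e]
  calc _ ≤ K := hx4 n hn
    _ ≤ 1 + K := by linarith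
    _ ≤ _ := le_self_pow₀ (by linarith) (by norm_num)

lemma f_analytic : AnalyticOnNhd ℂ f (Metric.ball (0 : ℂ) 1) := by
  intro z hz
  have h : (1 : ℂ) - z ≠ 0 := by
    intro h
    have : z = 1 := by linear_combination -h
    simp [this] at hz
  unfold f
  fun_prop (disch := exact h)

lemma f_deriv (z : ℂ) (hz : z ∈ Metric.ball (0 : ℂ) 1) :
    (1 - z) ^ 2 * deriv f z = -(2 - z) * f z := by
  have h : (1 : ℂ) - z ≠ 0 := by
    intro h
    have : z = 1 := by linear_combination -h
    simp [this] at hz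
  have h1 : HasDerivAt (fun w : ℂ => 1 - w) (-1) z := by
    simpa using (hasDerivAt_id z).const_sub 1
  have h2 := h1.mul (((hasDerivAt_id z).neg.div h1 h).cexp)
  have h3 : HasDerivAt f _ z := h2
  rw [h3.deriv]
  simp only [f, id, Pi.neg_apply, Pi.div_apply]
  field_simp
  ring

lemma f_rec (n : ℕ) : ∀ z ∈ Metric.ball (0 : ℂ) 1,
    (1 - z) ^ 2 * iteratedDeriv (n + 2) f z
      + (2 - z - 2 * (n + 1) * (1 - z)) * iteratedDeriv (n + 1) f z
      + ((n : ℂ) + 1) * (n - 1) * iteratedDeriv n f z = 0 := by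
  have hd : ∀ m : ℕ, ∀ z ∈ Metric.ball (0 : ℂ) 1,
      HasDerivAt (iteratedDeriv m f) (iteratedDeriv (m + 1) f z) z := by
    intro m z hz
    rw [iteratedDeriv_succ]
    apply DifferentiableAt.hasDerivAt
    rw [iteratedDeriv_eq_iterate]
    exact (f_analytic.iterated_deriv m z hz).differentiableAt
  have h1 : ∀ z : ℂ, HasDerivAt (fun w : ℂ => 1 - w) (-1) z := fun z => by
    simpa using (hasDerivAt_id z).const_sub 1
  have h2 : ∀ z : ℂ, HasDerivAt (fun w : ℂ => 2 - w) (-1) z := fun z => by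
    simpa using (hasDerivAt_id z).const_sub 2
  induction n with
  | zero =>
    intro z hz
    have hev : (fun w => (1 - w) ^ 2 * iteratedDeriv 1 f w + (2 - w) * iteratedDeriv 0 f w)
        =ᶠ[nhds z] fun _ => 0 := by
      filter_upwards [Metric.isOpen_ball.mem_nhds hz] with w hw
      simp only [iteratedDeriv_one, iteratedDeriv_zero]
      linear_combination f_deriv w hw
    have hD := (((h1 z).fun_pow 2).fun_mul (hd 1 z hz)).fun_add ((h2 z).fun_mul (hd 0 z hz))
    have h0 := hD.unique ((hasDerivAt_const z (0 : ℂ)).congr_of_eventuallyEq hev)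
    push_cast at h0 ⊢
    norm_num at h0 ⊢
    linear_combination h0
  | succ n ih =>
    intro z hz
    have hev : (fun w => (1 - w) ^ 2 * iteratedDeriv (n + 2) f w
        + (2 - w - 2 * (n + 1) * (1 - w)) * iteratedDeriv (n + 1) f w
        + ((n : ℂ) + 1) * (n - 1) * iteratedDeriv n f w)
        =ᶠ[nhds z] fun _ => 0 := by
      filter_upwards [Metric.isOpen_ball.mem_nhds hz] with w hw
      exact ih w hw
    have hD := ((((h1 z).fun_pow 2).fun_mul (hd (n + 2) z hz)).fun_add
      (((h2 z).fun_sub ((h1 z).const_mul (2 * ((n : ℂ) + 1)))).fun_mul (hd (n + 1) z hz))).fun_add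
      ((hd n z hz).const_mul (((n : ℂ) + 1) * (n - 1)))
    have h0 := hD.unique ((hasDerivAt_const z (0 : ℂ)).congr_of_eventuallyEq hev)
    push_cast at h0 ⊢
    rw [show n + 1 + 2 = n + 2 + 1 from rfl, show n + 1 + 1 = n + 2 from rfl] at *
    linear_combination h0

lemma t_rec (n : ℕ) :
    ((n : ℂ) + 2) * t (n + 2) = 2 * n * t (n + 1) - ((n : ℂ) - 1) * t n := by
  have h := f_rec n 0 (by simp)
  have hn : (n ! : ℂ) ≠ 0 := by exact_mod_cast n.factorial_ne_zero
  have hn1 : (n : ℂ) + 1 ≠ 0 := by exact_mod_cast n.succ_ne_zero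
  have hn2 : (n : ℂ) + 2 ≠ 0 := by exact_mod_cast (n + 1).succ_ne_zero
  have e1 : ((n + 1)! : ℂ) = (n + 1) * n ! := by rw [Nat.factorial_succ]; push_cast; ring
  have e2 : ((n + 2)! : ℂ) = (n + 2) * ((n + 1) * n !) := by
    rw [Nat.factorial_succ, Nat.factorial_succ]; push_cast; ring
  unfold t
  rw [e1, e2]
  field_simp
  linear_combination h

theorem taylor_coefficients_of_f :
    AnalyticOnNhd ℂ f (Metric.ball (0 : ℂ) 1) ∧
    Summable (fun n : ℕ => ‖t n‖) ∧
    (fun n : ℕ => t n) =O[Filter.atTop] (fun n : ℕ => (n : ℝ) ^ (-(5 / 4 : ℝ))) ∧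
    ∀ z : ℂ, ‖z‖ ≤ 1 → Summable (fun n : ℕ => ‖t n * z ^ n‖) := by
  obtain ⟨K₁, h₁⟩ := rec_bound (fun n => (t n).re) (fun n => by
    have := congrArg Complex.re (t_rec n)
    simpa using this)
  obtain ⟨K₂, h₂⟩ := rec_bound (fun n => (t n).im) (fun n => by
    have := congrArg Complex.im (t_rec n)
    simpa using this)
  have hO : (fun n : ℕ => t n) =O[Filter.atTop] (fun n : ℕ => (n : ℝ) ^ (-(5 / 4 : ℝ))) := by
    refine Asymptotics.IsBigO.of_bound (K₁ + K₂) ?_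
    filter_upwards [Filter.eventually_ge_atTop 3] with n hn
    rw [Real.norm_of_nonneg (by positivity), add_mul]
    exact (Complex.norm_le_abs_re_add_abs_im _).trans (add_le_add (h₁ n hn) (h₂ n hn))
  have hS : Summable (fun n : ℕ => ‖t n‖) :=
    summable_of_isBigO_nat (Real.summable_nat_rpow.2 (by norm_num)) hO.norm_left
  refine ⟨f_analytic, hS, hO, fun z hz => ?_⟩
  refine Summable.of_nonneg_of_le (fun _ => norm_nonneg _) (fun n => ?_) hS
  rw [norm_mul, norm_pow]
  exact mul_le_of_le_one_right (norm_nonneg _) (pow_le_one₀ (norm_nonneg _) hz)
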